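/- Let E and F be 2-dimensional real inner product spaces, ω_E and ω_F alternating bilinear forms on E and F respectively, and L : E → F a linear isomorphism with ω_F(Lx, Ly) = ω_E(x, y) for all x, y ∈ E. Suppose there is a constant C ≥ 1 such that C⁻¹ ≤ |ω_E(u, v)| ≤ C for every orthonormal pair u, v ∈ E and C⁻¹ ≤ |ω_F(u', v')| ≤ C for every orthonormal pair u', v' ∈ F. Then there exist orthonormal vectors y, z ∈ E with C⁻² ≤ ‖L y‖ · ‖L z‖ ≤ C². -/

import Mathlib

/-!
The eigenvectors of `L† ∘ L` form an orthonormal basis whose image under `L` is orthogonal. By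
homogeneity, a bilinear form whose norm lies in `[C⁻¹, C]` on orthonormal pairs has norm comparable
to `‖x‖ * ‖y‖`, with the same constants, on every orthogonal pair `x, y`. For two vectors `y, z` of
the basis, `ω_F (L y) (L z)` is therefore comparable to `‖L y‖ * ‖L z‖`, while it equals `ω_E y z`,
which lies in `[C⁻¹, C]`.
-/

section

variable {𝕜 E F G : Type*} [RCLike 𝕜] [NormedAddCommGroup E] [InnerProductSpace 𝕜 E]
  [NormedAddCommGroup F] [InnerProductSpace 𝕜 F] [NormedAddCommGroup G] [NormedSpace 𝕜 G]

theorem exists_orthonormalBasis_pairwise_inner_map_eq_zero [FiniteDimensional 𝕜 E] {n : ℕ}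
    (hn : Module.finrank 𝕜 E = n) (T : E →ₗ[𝕜] F) :
    ∃ b : OrthonormalBasis (Fin n) 𝕜 E, Pairwise fun i j ↦ inner 𝕜 (T (b i)) (T (b j)) = 0 := by
  -- The adjoint needs a finite-dimensional codomain, so replace `F` by the range of `T`.
  let S := T.rangeRestrict
  have hS : (S.adjoint ∘ₗ S).IsSymmetric := S.isSymmetric_adjoint_comp_self
  let b := hS.eigenvectorBasis hn
  refine ⟨b, fun i j hij ↦ ?_⟩
  calc inner 𝕜 (T (b i)) (T (b j))
    _ = inner 𝕜 (b i) ((S.adjoint ∘ₗ S) (b j)) := (S.adjoint_inner_right (b i) (S (b j))).symm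
    _ = hS.eigenvalues hn j * inner 𝕜 (b i) (b j) := by
      rw [hS.apply_eigenvectorBasis, inner_smul_right]
    _ = 0 := by rw [b.inner_eq_zero hij, mul_zero]

theorem norm_bilin_mem_Icc_of_inner_eq_zero (ω : E →ₗ[𝕜] E →ₗ[𝕜] G) {c d : ℝ}
    (hω : ∀ u v : E, ‖u‖ = 1 → ‖v‖ = 1 → inner 𝕜 u v = 0 → ‖ω u v‖ ∈ Set.Icc c d)
    {x y : E} (hxy : inner 𝕜 x y = 0) :
    ‖ω x y‖ ∈ Set.Icc (c * (‖x‖ * ‖y‖)) (d * (‖x‖ * ‖y‖)) := by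
  rcases eq_or_ne x 0 with rfl | hx
  · simp
  rcases eq_or_ne y 0 with rfl | hy
  · simp
  let u : E := (‖x‖⁻¹ : 𝕜) • x
  let v : E := (‖y‖⁻¹ : 𝕜) • y
  have huv : inner 𝕜 u v = 0 := by
    rw [inner_smul_left, inner_smul_right, hxy, mul_zero, mul_zero]
  have hscale : ‖ω u v‖ = ‖ω x y‖ / (‖x‖ * ‖y‖) := by
    simp only [u, v, map_smul, LinearMap.smul_apply, norm_smul, norm_inv, RCLike.norm_ofReal,
      abs_norm]
    field_simp
  have hpos : 0 < ‖x‖ * ‖y‖ := mul_pos (norm_pos_iff.2 hx) (norm_pos_iff.2 hy)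
  rw [Set.mem_Icc, ← le_div_iff₀ hpos, ← div_le_iff₀ hpos, ← hscale]
  exact hω u v (norm_smul_inv_norm hx) (norm_smul_inv_norm hy) huv

theorem stmt_9_general [FiniteDimensional 𝕜 E] {n : ℕ} (hn : Module.finrank 𝕜 E = n)
    (ωE : E →ₗ[𝕜] E →ₗ[𝕜] G) (ωF : F →ₗ[𝕜] F →ₗ[𝕜] G)
    (L : E →ₗ[𝕜] F) (hL : ∀ x y : E, ωF (L x) (L y) = ωE x y) {C : ℝ} (hC : 0 < C)
    (hboundE : ∀ u v : E, ‖u‖ = 1 → ‖v‖ = 1 → inner 𝕜 u v = 0 → ‖ωE u v‖ ∈ Set.Icc C⁻¹ C)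
    (hboundF : ∀ u v : F, ‖u‖ = 1 → ‖v‖ = 1 → inner 𝕜 u v = 0 → ‖ωF u v‖ ∈ Set.Icc C⁻¹ C) :
    ∃ b : OrthonormalBasis (Fin n) 𝕜 E, Pairwise fun i j ↦
      ‖L (b i)‖ * ‖L (b j)‖ ∈ Set.Icc (C ^ 2)⁻¹ (C ^ 2) := by
  obtain ⟨b, hLb⟩ := exists_orthonormalBasis_pairwise_inner_map_eq_zero hn L
  refine ⟨b, fun i j hij ↦ ?_⟩
  obtain ⟨hE_lower, hE_upper⟩ :=
    hboundE _ _ (b.norm_eq_one i) (b.norm_eq_one j) (b.inner_eq_zero hij)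
  obtain ⟨hF_lower, hF_upper⟩ := norm_bilin_mem_Icc_of_inner_eq_zero ωF hboundF (hLb hij)
  rw [hL] at hF_lower hF_upper
  constructor
  · calc (C ^ 2)⁻¹ = C⁻¹ * C⁻¹ := by rw [pow_two, mul_inv]
      _ ≤ ‖L (b i)‖ * ‖L (b j)‖ := (inv_mul_le_iff₀ hC).2 (hE_lower.trans hF_upper)
  · calc ‖L (b i)‖ * ‖L (b j)‖ ≤ C * C := (inv_mul_le_iff₀ hC).1 (hF_lower.trans hE_upper)
      _ = C ^ 2 := (pow_two C).symm

end

/-- Let `E, F` be 2-dimensional real inner product spaces with alternating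
bilinear forms `ω_E, ω_F`, and `L : E ≃ F` a linear isomorphism pulling back `ω_F` to `ω_E`.
If `C ≥ 1` bounds `|ω_E|` and `|ω_F|` above by `C` and below by `C⁻¹` on orthonormal pairs,
then there exist orthonormal `y, z ∈ E` with `C⁻² ≤ ‖L y‖·‖L z‖ ≤ C²`. -/
theorem stmt_9 {E F : Type*} [NormedAddCommGroup E] [InnerProductSpace ℝ E]
    [NormedAddCommGroup F] [InnerProductSpace ℝ F]
    (hE : Module.finrank ℝ E = 2) (hF : Module.finrank ℝ F = 2)
    (ωE : E →ₗ[ℝ] E →ₗ[ℝ] ℝ) (ωF : F →ₗ[ℝ] F →ₗ[ℝ] ℝ)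
    (haltE : ∀ v : E, ωE v v = 0) (haltF : ∀ w : F, ωF w w = 0)
    (L : E ≃ₗ[ℝ] F) (hL : ∀ x y : E, ωF (L x) (L y) = ωE x y)
    (C : ℝ) (hC : 1 ≤ C)
    (hboundE : ∀ u v : E, ‖u‖ = 1 → ‖v‖ = 1 → inner (𝕜 := ℝ) u v = 0 →
      C⁻¹ ≤ |ωE u v| ∧ |ωE u v| ≤ C)
    (hboundF : ∀ u' v' : F, ‖u'‖ = 1 → ‖v'‖ = 1 → inner (𝕜 := ℝ) u' v' = 0 →
      C⁻¹ ≤ |ωF u' v'| ∧ |ωF u' v'| ≤ C) :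
    ∃ y z : E, ‖y‖ = 1 ∧ ‖z‖ = 1 ∧ inner (𝕜 := ℝ) y z = 0 ∧
      (C ^ 2)⁻¹ ≤ ‖L y‖ * ‖L z‖ ∧ ‖L y‖ * ‖L z‖ ≤ C ^ 2 := by
  have : FiniteDimensional ℝ E := Module.finite_of_finrank_eq_succ hE
  obtain ⟨b, hb⟩ := stmt_9_general hE ωE ωF L.toLinearMap hL (one_pos.trans_le hC) hboundE hboundF
  exact ⟨b 0, b 1, b.norm_eq_one 0, b.norm_eq_one 1, b.inner_eq_zero zero_ne_one, hb zero_ne_one⟩
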